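/- arXiv:2009.11897 — 4 statements merged into one kernel-verified Lean document; each statement's English description precedes it below -/
import Mathlib

section
/- In (ℤ/3ℤ)^2, where a 3-term arithmetic progression of distinct elements is an unordered triple {a, a+d, a+2d} of three pairwise distinct elements (equivalently, an affine line, of which there are 12 in total): every subset of size 5 contains at least 1 such triple, every subset of size 6 contains at least 2, every subset of size 7 contains at least 5, and every subset of size 8 contains at least 8. -/
/-- `A` contains a `k`-term arithmetic progression `a, a+d, …, a+(k-1)d`
whose terms are pairwise distinct. -/
def IsDistinctAP {G : Type*} [AddCommGroup G] (k : ℕ) (A : Set G) : Prop :=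
  ∃ a d : G, (∀ i : Fin k, a + (i : ℕ) • d ∈ A) ∧
    Function.Injective fun i : Fin k => a + (i : ℕ) • d

/-- `rAP k m n` is the largest cardinality of a subset of `(ℤ/mℤ)^n` containing
no `k`-term arithmetic progression of pairwise distinct elements. -/
noncomputable def rAP (k m n : ℕ) : ℕ :=
  sSup {s : ℕ | ∃ A : Finset (Fin n → ZMod m),
    ¬ IsDistinctAP k (A : Set (Fin n → ZMod m)) ∧ A.card = s}

/-- The set of 3-term arithmetic progressions of distinct elements contained in
`A ⊆ (ℤ/3ℤ)^n`, viewed as unordered triples: 3-element subsets summing to `0`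
(equivalently, affine lines). -/
def apTriples (n : ℕ) (A : Finset (Fin n → ZMod 3)) : Finset (Finset (Fin n → ZMod 3)) :=
  (A.powersetCard 3).filter fun t => ∑ x ∈ t, x = 0

/-- The lines of the affine plane of order three. -/
def linesTwo : List (Finset (Fin 2 → ZMod 3)) :=
  [{![0,0],![0,1],![0,2]}, {![1,0],![1,1],![1,2]}, {![2,0],![2,1],![2,2]},
   {![0,0],![1,0],![2,0]}, {![0,1],![1,1],![2,1]}, {![0,2],![1,2],![2,2]},
   {![0,0],![1,1],![2,2]}, {![0,1],![1,2],![2,0]}, {![0,2],![1,0],![2,1]},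
   {![0,0],![1,2],![2,1]}, {![0,1],![1,0],![2,2]}, {![0,2],![1,1],![2,0]}]

theorem lines_nodup : linesTwo.Nodup := by decide +kernel

theorem lines_mem : ∀ t ∈ linesTwo, t.card = 3 ∧ ∑ x ∈ t, x = 0 := by decide +kernel

theorem apTriples_univ_card : (apTriples 2 Finset.univ).card = 12 := by decide +kernel

theorem le_apTriples (A : Finset (Fin 2 → ZMod 3)) :
    (linesTwo.map fun t => if t ⊆ A then 1 else 0).sum ≤ (apTriples 2 A).card := by
  have h : (linesTwo.toFinset.filter (· ⊆ A)) ⊆ apTriples 2 A := by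
    intro t ht
    simp only [Finset.mem_filter, List.mem_toFinset] at ht
    simp only [apTriples, Finset.mem_filter, Finset.mem_powersetCard]
    exact ⟨⟨ht.2, (lines_mem t ht.1).1⟩, (lines_mem t ht.1).2⟩
  have h2 := Finset.card_le_card h
  rw [Finset.card_filter, List.sum_toFinset _ lines_nodup] at h2
  exact h2

theorem card_two (A : Finset (Fin 2 → ZMod 3)) :
    A.card = (([![0,0],![0,1],![0,2],![1,0],![1,1],![1,2],![2,0],![2,1],![2,2]] :
      List (Fin 2 → ZMod 3)).map fun x => if x ∈ A then 1 else 0).sum := by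
  have hu : (Finset.univ : Finset (Fin 2 → ZMod 3)) =
    ([![0,0],![0,1],![0,2],![1,0],![1,1],![1,2],![2,0],![2,1],![2,2]] :
      List (Fin 2 → ZMod 3)).toFinset := by decide +kernel
  rw [← List.sum_toFinset _ (by decide +kernel), ← hu]
  simp

theorem bool_key : ∀ a b c d e f g h i : Bool,
    let n := a.toNat + (b.toNat + (c.toNat + (d.toNat + (e.toNat + (f.toNat + (g.toNat +
      (h.toNat + i.toNat)))))))
    let m := (a && b && c).toNat + (d && e && f).toNat + (g && h && i).toNat
      + (a && d && g).toNat + (b && e && h).toNat + (c && f && i).toNat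
      + (a && e && i).toNat + (b && f && g).toNat + (c && d && h).toNat
      + (a && f && h).toNat + (b && d && i).toNat + (c && e && g).toNat
    (n = 5 → 1 ≤ m) ∧ (n = 6 → 2 ≤ m) ∧ (n = 7 → 5 ≤ m) ∧ (n = 8 → 8 ≤ m) := by
  decide +kernel

theorem min_triples_dim_two :
    (apTriples 2 Finset.univ).card = 12 ∧
    ∀ A : Finset (Fin 2 → ZMod 3),
      (A.card = 5 → 1 ≤ (apTriples 2 A).card) ∧
      (A.card = 6 → 2 ≤ (apTriples 2 A).card) ∧
      (A.card = 7 → 5 ≤ (apTriples 2 A).card) ∧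
      (A.card = 8 → 8 ≤ (apTriples 2 A).card) := by
  refine ⟨apTriples_univ_card, fun A => ?_⟩
  have h1 := le_apTriples A
  have h2 := card_two A
  have h3 := bool_key (decide (![0,0] ∈ A)) (decide (![0,1] ∈ A)) (decide (![0,2] ∈ A))
    (decide (![1,0] ∈ A)) (decide (![1,1] ∈ A)) (decide (![1,2] ∈ A))
    (decide (![2,0] ∈ A)) (decide (![2,1] ∈ A)) (decide (![2,2] ∈ A))
  simp only [linesTwo, List.map_cons, List.map_nil, List.sum_cons, List.sum_nil,
    Finset.insert_subset_iff, Finset.singleton_subset_iff] at h1 h2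
  simp only [← Bool.decide_and, Bool.toNat, Bool.cond_decide, and_assoc] at h3
  omega
end

section
/- In (ℤ/3ℤ)^3, where a 3-term arithmetic progression of distinct elements is an unordered triple {a, a+d, a+2d} of three pairwise distinct elements (equivalently, an affine line, of which there are 117 in total): every subset of size 10 contains at least 2 such triples, and every subset of size 13 contains at least 7 such triples. -/
abbrev V3 := Fin 3 → ZMod 3

def dt (v a : V3) : ZMod 3 := v 0 * a 0 + v 1 * a 1 + v 2 * a 2

def NZ : Finset V3 := Finset.univ.filter (fun v => v ≠ 0)

lemma dt_sub (v a b : V3) : dt v (a - b) = dt v a - dt v b := by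
  simp only [dt, Pi.sub_apply]; ring

lemma cnt2 : ∀ d : V3, d ≠ 0 → (NZ.filter (fun v => dt v d = 0)).card = 8 := by
  decide +kernel

lemma cnt3 : ∀ d e : V3, d ≠ 0 → e ≠ 0 → d ≠ e →
    (NZ.filter (fun v => dt v d = 0 ∧ dt v e = 0)).card = if d + e = 0 then 8 else 2 := by
  decide +kernel

lemma plane_card : ∀ v ∈ NZ, ∀ c : ZMod 3,
    (Finset.univ.filter (fun a => dt v a = c)).card = 9 := by
  decide +kernel

lemma dt_comm (v w : V3) : dt v w = dt w v := by
  simp only [dt]; ring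

lemma line_card (v : V3) (hv : v ∈ NZ) (w : V3) (hw : w ∈ NZ) (h1 : w ≠ v) (h2 : w ≠ -v)
    (c c' : ZMod 3) :
    (Finset.univ.filter (fun a => dt v a = c ∧ dt w a = c')).card ≤ 3 := by
  rcases Finset.eq_empty_or_nonempty
    (Finset.univ.filter (fun a => dt v a = c ∧ dt w a = c')) with h | ⟨a₀, h⟩
  · rw [h]; simp
  have k := cnt3 v w (Finset.mem_filter.1 hv).2 (Finset.mem_filter.1 hw).2 h1.symm
  rw [if_neg (fun h => h2 (eq_neg_of_add_eq_zero_right h))] at k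
  have h0 := (Finset.mem_filter.1 h).2
  have k2 := Finset.card_insert_le (0 : V3) (NZ.filter (fun u => dt u v = 0 ∧ dt u w = 0))
  rw [k] at k2
  refine le_trans (Finset.card_le_card_of_injOn (fun a => a - a₀) ?_ ?_) k2
  · intro a ha
    have ha' := (Finset.mem_filter.1 (Finset.mem_coe.1 ha)).2
    rw [Finset.mem_coe, Finset.mem_insert, Finset.mem_filter, dt_comm _ v, dt_comm _ w, dt_sub,
      dt_sub, ha'.1, ha'.2, h0.1, h0.2]
    by_cases e : a - a₀ = 0
    · exact Or.inl e
    · exact Or.inr ⟨Finset.mem_filter.2 ⟨Finset.mem_univ _, e⟩, sub_self _, sub_self _⟩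
  · intro a _ b _ hab
    exact sub_left_injective hab

/-- slice -/
def sl (A : Finset V3) (v : V3) (c : ZMod 3) : Finset V3 := A.filter (fun a => dt v a = c)

def tr (A : Finset V3) : ℕ := (apTriples 3 A).card

lemma slice_powerset (A : Finset V3) (v : V3) (c : ZMod 3) (k : ℕ) :
    (sl A v c).powersetCard k = (A.powersetCard k).filter (fun t => ∀ x ∈ t, dt v x = c) := by
  ext t
  simp only [sl, Finset.mem_powersetCard, Finset.mem_filter, Finset.subset_iff]
  grind

lemma swap (A : Finset V3) (k : ℕ) :
    ∑ v ∈ NZ, ∑ c : ZMod 3, (sl A v c).card.choose k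
      = ∑ t ∈ A.powersetCard k, ∑ v ∈ NZ, ∑ c : ZMod 3, (if ∀ x ∈ t, dt v x = c then 1 else 0) := by
  rw [Finset.sum_comm (s := A.powersetCard k)]
  refine Finset.sum_congr rfl fun v _ => ?_
  rw [Finset.sum_comm (s := A.powersetCard k)]
  refine Finset.sum_congr rfl fun c _ => ?_
  rw [← Finset.card_powersetCard, slice_powerset, Finset.card_filter]

lemma id2 (A : Finset V3) :
    ∑ v ∈ NZ, ∑ c : ZMod 3, (sl A v c).card.choose 2 = 8 * A.card.choose 2 := by
  rw [swap, Finset.sum_const_nat (m := 8), Finset.card_powersetCard, mul_comm]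
  intro t ht
  obtain ⟨a, b, hab, rfl⟩ := Finset.card_eq_two.1 (Finset.mem_powersetCard.1 ht).2
  rw [← cnt2 (b - a) (sub_ne_zero.2 hab.symm), Finset.card_filter]
  refine Finset.sum_congr rfl fun v _ => ?_
  simp only [dt_sub, sub_eq_zero, Finset.mem_insert, Finset.mem_singleton, forall_eq_or_imp, forall_eq]
  generalize dt v a = p
  generalize dt v b = q
  revert p q; decide

lemma sum_zero_iff (a b c : V3) : (b - a) + (c - a) = 0 ↔ a + (b + c) = 0 := by
  have h : (b - a) + (c - a) = a + (b + c) := by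
    ext i
    simp only [Pi.add_apply, Pi.sub_apply]
    generalize a i = p
    generalize b i = q
    generalize c i = r
    revert p q r; decide
  rw [h]

lemma id3 (A : Finset V3) :
    ∑ v ∈ NZ, ∑ c : ZMod 3, (sl A v c).card.choose 3 = 2 * A.card.choose 3 + 6 * tr A := by
  have key : ∀ t ∈ A.powersetCard 3,
      ∑ v ∈ NZ, ∑ c : ZMod 3, (if ∀ x ∈ t, dt v x = c then 1 else 0)
        = 2 + 6 * (if ∑ x ∈ t, x = 0 then 1 else 0) := by
    intro t ht
    obtain ⟨a, b, c, hab, hac, hbc, rfl⟩ := Finset.card_eq_three.1 (Finset.mem_powersetCard.1 ht).2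
    have h := cnt3 (b - a) (c - a) (sub_ne_zero.2 hab.symm) (sub_ne_zero.2 hac.symm)
      (fun h => hbc (sub_left_injective h))
    rw [Finset.card_filter] at h
    have hs : ∑ x ∈ ({a, b, c} : Finset V3), x = a + (b + c) := by
      rw [Finset.sum_insert (by simp [hab, hac]), Finset.sum_pair hbc]
    rw [hs]
    simp only [sum_zero_iff] at h
    trans (if a + (b + c) = 0 then 8 else 2)
    · rw [← h]
      refine Finset.sum_congr rfl fun v _ => ?_
      simp only [dt_sub, sub_eq_zero, Finset.mem_insert, Finset.mem_singleton, forall_eq_or_imp, forall_eq]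
      generalize dt v a = p
      generalize dt v b = q
      generalize dt v c = r
      revert p q r; decide
    · split_ifs <;> rfl
  rw [swap, Finset.sum_congr rfl key, Finset.sum_add_distrib, ← Finset.mul_sum,
    ← Finset.card_filter, Finset.sum_const, Finset.card_powersetCard, smul_eq_mul, mul_comm]
  rfl

lemma zsum (f : ZMod 3 → ℕ) : ∑ c : ZMod 3, f c = f 0 + f 1 + f 2 := Fin.sum_univ_three f

lemma sl_total (A : Finset V3) (v : V3) :
    (sl A v 0).card + (sl A v 1).card + (sl A v 2).card = A.card := by
  rw [← zsum (fun c => (sl A v c).card)]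
  exact (Finset.card_eq_sum_card_fiberwise (fun _ _ => Finset.mem_coe.2 (Finset.mem_univ _))).symm

lemma tr_total (A : Finset V3) (v : V3) :
    tr (sl A v 0) + tr (sl A v 1) + tr (sl A v 2) ≤ tr A := by
  have h : ∀ c, tr (sl A v c)
      = ((apTriples 3 A).filter (fun t => ∀ x ∈ t, dt v x = c)).card := by
    intro c
    unfold tr apTriples
    rw [slice_powerset, Finset.filter_comm]
  rw [← zsum (fun c => tr (sl A v c)), Finset.sum_congr rfl (fun c _ => h c),
    ← Finset.card_biUnion]
  · refine Finset.card_le_card ?_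
    intro t ht
    simp only [Finset.mem_biUnion, Finset.mem_filter] at ht
    obtain ⟨_, _, h, _⟩ := ht
    exact h
  · intro c _ c' _ hcc
    rw [Function.onFun, Finset.disjoint_left]
    intro t h1 h2
    simp only [Finset.mem_filter, apTriples, Finset.mem_powersetCard] at h1 h2
    obtain ⟨x, hx⟩ := Finset.card_pos.1 (by rw [h1.1.1.2]; norm_num : 0 < t.card)
    exact hcc ((h1.2 x hx).symm.trans (h2.2 x hx))

/-- the minimum number of lines among `k` points of a plane -/
def fm (k : ℕ) : ℕ := if k ≤ 4 then 0 else if k = 5 then 1 else if k = 6 then 2 else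
  if k = 7 then 5 else if k = 8 then 8 else 12

lemma NZ_card : NZ.card = 26 := by decide +kernel

lemma pm_card : ∀ v ∈ NZ, (NZ.filter (fun w => ¬ (w ≠ v ∧ w ≠ -v))).card = 2 := by decide +kernel

lemma rest_card : ∀ v ∈ NZ, (NZ.filter (fun w => w ≠ v ∧ w ≠ -v)).card = 24 := by decide +kernel

lemma dt_neg (v a : V3) : dt (-v) a = - dt v a := by simp only [dt, Pi.neg_apply]; ring

lemma sl_self (A : Finset V3) (v w : V3) (c : ZMod 3) (hw : ¬ (w ≠ v ∧ w ≠ -v)) (k : ℕ) :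
    ∑ c' : ZMod 3, (sl (sl A v c) w c').card.choose (k + 1) = (sl A v c).card.choose (k + 1) := by
  have : ∃ d : ZMod 3, ∀ a ∈ sl A v c, dt w a = d := by
    by_cases h : w = v
    · exact ⟨c, fun a ha => by rw [h]; exact (Finset.mem_filter.1 ha).2⟩
    · have h2 : w = -v := by by_contra h3; exact hw ⟨h, h3⟩
      exact ⟨-c, fun a ha => by rw [h2, dt_neg, (Finset.mem_filter.1 ha).2]⟩
  obtain ⟨d, hd⟩ := this
  rw [Finset.sum_eq_single d]
  · congr 2
    exact Finset.filter_true_of_mem hd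
  · intro c' _ hc
    have : sl (sl A v c) w c' = ∅ :=
      Finset.filter_false_of_mem (fun a ha h => hc (h.symm.trans (hd a ha)))
    rw [this]; rfl
  · simp

lemma plane_bound (A : Finset V3) (v : V3) (hv : v ∈ NZ) (c : ZMod 3) :
    (sl A v c).card ≤ 9 ∧ fm (sl A v c).card ≤ tr (sl A v c) := by
  have h9 : (sl A v c).card ≤ 9 := by
    rw [← plane_card v hv c]
    exact Finset.card_le_card (Finset.filter_subset_filter _ (Finset.subset_univ _))
  refine ⟨h9, ?_⟩
  have e2 := id2 (sl A v c)
  have e3 := id3 (sl A v c)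
  rw [← Finset.sum_filter_add_sum_filter_not NZ (fun w => w ≠ v ∧ w ≠ -v)] at e2 e3
  have q : ∀ k, ∑ w ∈ NZ with ¬ (w ≠ v ∧ w ≠ -v), ∑ c' : ZMod 3,
      (sl (sl A v c) w c').card.choose (k+1) = 2 * (sl A v c).card.choose (k+1) := by
    intro k
    rw [Finset.sum_const_nat (m := (sl A v c).card.choose (k+1)), pm_card v hv]
    intro w hw
    exact sl_self A v w c (Finset.mem_filter.1 hw).2 k
  have q1 := q 1
  have q2 := q 2
  norm_num only at q1 q2
  rw [q1] at e2
  rw [q2] at e3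
  have r3 : ∀ w ∈ NZ.filter (fun w => w ≠ v ∧ w ≠ -v), ∀ c', (sl (sl A v c) w c').card ≤ 3 := by
    intro w hw c'
    obtain ⟨h1, h2, h3⟩ := Finset.mem_filter.1 hw
    refine le_trans (Finset.card_le_card ?_) (line_card v hv w h1 h2 h3 c c')
    intro a ha
    simp only [sl, Finset.mem_filter] at ha
    simp [ha.1.2, ha.2]
  -- generic linear bound
  have lin : ∀ p r s : ℕ, (∀ x ≤ 3, ∀ y ≤ 3, ∀ z ≤ 3, x + y + z = (sl A v c).card →
        r * (x.choose 2 + y.choose 2 + z.choose 2) ≤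
          p * (x.choose 3 + y.choose 3 + z.choose 3) + s) →
      r * (6 * (sl A v c).card.choose 2) ≤ p * (6 * tr (sl A v c)) + 24 * s := by
    intro p r s H
    have e2' : 6 * (sl A v c).card.choose 2 = ∑ w ∈ NZ with (w ≠ v ∧ w ≠ -v), ∑ c' : ZMod 3,
      (sl (sl A v c) w c').card.choose 2 := by omega
    have e3' : 6 * tr (sl A v c) = ∑ w ∈ NZ with (w ≠ v ∧ w ≠ -v), ∑ c' : ZMod 3,
      (sl (sl A v c) w c').card.choose 3 := by omega
    rw [e2', e3', Finset.mul_sum, Finset.mul_sum, ← rest_card v hv, ← smul_eq_mul (Finset.card _),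
      ← Finset.sum_const, ← Finset.sum_add_distrib]
    refine Finset.sum_le_sum fun w hw => ?_
    rw [zsum, zsum]
    exact H _ (r3 w hw 0) _ (r3 w hw 1) _ (r3 w hw 2) (sl_total _ w)
  generalize (sl A v c).card = k at *
  generalize tr (sl A v c) = t at *
  interval_cases k
  all_goals first | exact Nat.zero_le _ | skip
  · have := lin 2 1 2 (by decide)
    simp [fm, Nat.choose] at this ⊢; omega
  · have := lin 3 2 6 (by decide)
    simp [fm, Nat.choose] at this ⊢; omega
  · have := lin 1 1 4 (by decide)
    simp [fm, Nat.choose] at this ⊢; omega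
  · have := lin 1 1 5 (by decide)
    simp [fm, Nat.choose] at this ⊢; omega
  · have := lin 1 1 6 (by decide)
    simp [fm, Nat.choose] at this ⊢; omega

lemma main_lin (A : Finset V3) (p r s : ℕ)
    (H : ∀ x ≤ 9, ∀ y ≤ 9, ∀ z ≤ 9, x + y + z = A.card → fm x + fm y + fm z ≤ tr A →
        r * (x.choose 2 + y.choose 2 + z.choose 2) ≤
          p * (x.choose 3 + y.choose 3 + z.choose 3) + s) :
    r * (8 * A.card.choose 2) ≤ p * (2 * A.card.choose 3 + 6 * tr A) + 26 * s := by
  rw [← id2, ← id3, Finset.mul_sum, Finset.mul_sum, ← NZ_card, ← smul_eq_mul (Finset.card _),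
    ← Finset.sum_const, ← Finset.sum_add_distrib]
  refine Finset.sum_le_sum fun v hv => ?_
  rw [zsum, zsum]
  have h0 := plane_bound A v hv 0
  have h1 := plane_bound A v hv 1
  have h2 := plane_bound A v hv 2
  have h3 := tr_total A v
  exact H _ h0.1 _ h1.1 _ h2.1 (sl_total A v) (by omega)

lemma arith10 : ∀ x ≤ 9, ∀ y ≤ 9, ∀ z ≤ 9, x + y + z = 10 → fm x + fm y + fm z ≤ 1 →
    2 * (x.choose 2 + y.choose 2 + z.choose 2) ≤
          1 * (x.choose 3 + y.choose 3 + z.choose 3) + 18 := by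
  decide +kernel

lemma arith13 : ∀ x ≤ 9, ∀ y ≤ 9, ∀ z ≤ 9, x + y + z = 13 → fm x + fm y + fm z ≤ 6 →
    11 * (x.choose 2 + y.choose 2 + z.choose 2) ≤
          4 * (x.choose 3 + y.choose 3 + z.choose 3) + 170 := by
  decide +kernel

theorem min_triples_dim_three :
    (apTriples 3 Finset.univ).card = 117 ∧
    ∀ A : Finset (Fin 3 → ZMod 3),
      (A.card = 10 → 2 ≤ (apTriples 3 A).card) ∧
      (A.card = 13 → 7 ≤ (apTriples 3 A).card) := by
  refine ⟨?_, fun A => ⟨fun hA => ?_, fun hA => ?_⟩⟩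
  · have h := id3 Finset.univ
    have h1 : ∑ v ∈ NZ, ∑ c : ZMod 3, (sl Finset.univ v c).card.choose 3 = 26 * 252 := by
      rw [Finset.sum_const_nat (m := 252), NZ_card]
      intro v hv
      rw [zsum]
      simp only [sl, plane_card v hv]
      rfl
    have h2 : (Finset.univ : Finset V3).card = 27 := by simp
    have h3 : Nat.choose 27 3 = 2925 := by decide +kernel
    rw [h1, h2, h3] at h
    change tr Finset.univ = 117
    omega
  · change 2 ≤ tr A
    by_contra hlt
    have h := main_lin A 1 2 18 (fun x hx y hy z hz hs hf =>
      arith10 x hx y hy z hz (hs.trans hA) (by omega))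
    have h2 : Nat.choose 10 2 = 45 := by decide +kernel
    have h3 : Nat.choose 10 3 = 120 := by decide +kernel
    rw [hA, h2, h3] at h
    omega
  · change 7 ≤ tr A
    by_contra hlt
    have h := main_lin A 4 11 170 (fun x hx y hy z hz hs hf =>
      arith13 x hx y hy z hz (hs.trans hA) (by omega))
    have h2 : Nat.choose 13 2 = 78 := by decide +kernel
    have h3 : Nat.choose 13 3 = 286 := by decide +kernel
    rw [hA, h2, h3] at h
    omega
end

section
/- If four subsets A₁, A₂, A₃, A₄ ⊆ (ℤ/3ℤ)^2 satisfy property (*)_6 (i.e., Aᵢ ∩ Aⱼ contains no 3-term arithmetic progression of distinct elements for all i ≠ j) and |A₁| + |A₂| + |A₃| + |A₄| = 25, then exactly one of the four subsets has size 7 and the other three have size 6. -/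
lemma cap_bool : ∀ a b c d e f g h i : Bool,
    (a && b && c) = false → (d && e && f) = false → (g && h && i) = false →
    (a && d && g) = false → (b && e && h) = false → (c && f && i) = false →
    (a && e && i) = false → (b && f && g) = false → (c && d && h) = false →
    (a && f && h) = false → (b && d && i) = false → (c && e && g) = false →
    a.toNat + b.toNat + c.toNat + d.toNat + e.toNat + f.toNat + g.toNat + h.toNat + i.toNat ≤ 4 := by
  decide

lemma line_bool (S : Finset (Fin 2 → ZMod 3))
    (hS : ¬ IsDistinctAP 3 (S : Set (Fin 2 → ZMod 3))) (x y z : Fin 2 → ZMod 3)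
    (hxy : x ≠ y) (hxz : x ≠ z) (hyz : y ≠ z) (h1 : x + 1 • (y - x) = y)
    (h2 : x + 2 • (y - x) = z) :
    (decide (x ∈ S) && decide (y ∈ S) && decide (z ∈ S)) = false := by
  by_contra hc
  simp only [Bool.not_eq_false, Bool.and_eq_true, decide_eq_true_eq] at hc
  obtain ⟨⟨hx, hy⟩, hz⟩ := hc
  apply hS
  have h0 : x + 0 • (y - x) = x := by simp
  refine ⟨x, y - x, ?_, ?_⟩
  · intro i
    fin_cases i
    · show x + 0 • (y - x) ∈ _
      rw [h0]; exact hx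
    · show x + 1 • (y - x) ∈ _
      rw [h1]; exact hy
    · show x + 2 • (y - x) ∈ _
      rw [h2]; exact hz
  · have : (fun i : Fin 3 => x + (i : ℕ) • (y - x)) = ![x, y, z] := by
      funext i
      fin_cases i
      · exact h0
      · exact h1
      · exact h2
    rw [this]
    intro i j hij
    fin_cases i <;> fin_cases j <;> simp_all

lemma cap_card (S : Finset (Fin 2 → ZMod 3))
    (hS : ¬ IsDistinctAP 3 (S : Set (Fin 2 → ZMod 3))) : S.card ≤ 4 := by
  have hl := line_bool S hS
  have hu : (Finset.univ : Finset (Fin 2 → ZMod 3)) =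
      {![0,0], ![0,1], ![0,2], ![1,0], ![1,1], ![1,2], ![2,0], ![2,1], ![2,2]} := by decide
  have key := cap_bool (decide (![0,0] ∈ S)) (decide (![0,1] ∈ S)) (decide (![0,2] ∈ S))
    (decide (![1,0] ∈ S)) (decide (![1,1] ∈ S)) (decide (![1,2] ∈ S))
    (decide (![2,0] ∈ S)) (decide (![2,1] ∈ S)) (decide (![2,2] ∈ S))
    (hl _ _ _ (by decide) (by decide) (by decide) (by decide) (by decide))
    (hl _ _ _ (by decide) (by decide) (by decide) (by decide) (by decide))
    (hl _ _ _ (by decide) (by decide) (by decide) (by decide) (by decide))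
    (hl _ _ _ (by decide) (by decide) (by decide) (by decide) (by decide))
    (hl _ _ _ (by decide) (by decide) (by decide) (by decide) (by decide))
    (hl _ _ _ (by decide) (by decide) (by decide) (by decide) (by decide))
    (hl _ _ _ (by decide) (by decide) (by decide) (by decide) (by decide))
    (hl _ _ _ (by decide) (by decide) (by decide) (by decide) (by decide))
    (hl _ _ _ (by decide) (by decide) (by decide) (by decide) (by decide))
    (hl _ _ _ (by decide) (by decide) (by decide) (by decide) (by decide))
    (hl _ _ _ (by decide) (by decide) (by decide) (by decide) (by decide))
    (hl _ _ _ (by decide) (by decide) (by decide) (by decide) (by decide))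
  have hc : S.card = ∑ p : Fin 2 → ZMod 3, (decide (p ∈ S)).toNat := by
    have h1 : ∀ p, (decide (p ∈ S)).toNat = if p ∈ S then 1 else 0 := by
      intro p; by_cases hp : p ∈ S <;> simp [hp]
    simp only [h1]
    simp
  rw [hc, hu]
  repeat rw [Finset.sum_insert (by decide)]
  rw [Finset.sum_singleton]
  omega

theorem extremal_structure_dim_two (A : Fin 4 → Finset (Fin 2 → ZMod 3))
    (hstar : ∀ i j : Fin 4, i ≠ j →
      ¬ IsDistinctAP 3 ((A i ∩ A j : Finset (Fin 2 → ZMod 3)) : Set (Fin 2 → ZMod 3)))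
    (hsum : (A 0).card + (A 1).card + (A 2).card + (A 3).card = 25) :
    ∃ i : Fin 4, (A i).card = 7 ∧ ∀ j : Fin 4, j ≠ i → (A j).card = 6 := by
  have hp : ∀ i j : Fin 4, i ≠ j → (A i).card + (A j).card ≤ 13 := by
    intro i j hij
    have h1 := cap_card _ (hstar i j hij)
    have h2 := Finset.card_union_add_card_inter (A i) (A j)
    have h3 := Finset.card_le_univ (A i ∪ A j)
    have h4 : Fintype.card (Fin 2 → ZMod 3) = 9 := by simp
    omega
  have h01 := hp 0 1 (by decide)
  have h02 := hp 0 2 (by decide)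
  have h03 := hp 0 3 (by decide)
  have h12 := hp 1 2 (by decide)
  have h13 := hp 1 3 (by decide)
  have h23 := hp 2 3 (by decide)
  have hex : ∃ i : Fin 4, 7 ≤ (A i).card := by
    by_contra hc
    push Not at hc
    have := hc 0
    have := hc 1
    have := hc 2
    have := hc 3
    omega
  obtain ⟨i, hi⟩ := hex
  refine ⟨i, ?_, ?_⟩
  · fin_cases i <;> simp at hi ⊢ <;> omega
  · intro j hj
    fin_cases i <;> fin_cases j <;> simp at hi hj ⊢ <;> omega
end

section
/- Let n ≥ 1 and let A_i ⊆ (ℤ/3ℤ)^n, for i ranging over an index set I of size 2^n, be a family of subsets such that A_i ∩ A_j contains no 3-term arithmetic progression of distinct elements for all distinct i, j ∈ I. Then S := ∑_{i ∈ I} |A_i| satisfies S² − 3^n·S − 2^{2n}·3^n·r_3(ℤ_3^n) ≤ 0. -/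
theorem cauchy_schwarz_bound (n : ℕ) (hn : 1 ≤ n) (I : Type*) [Fintype I]
    (hI : Fintype.card I = 2 ^ n) (A : I → Finset (Fin n → ZMod 3))
    (hstar : ∀ i j : I, i ≠ j →
      ¬ IsDistinctAP 3 ((A i ∩ A j : Finset (Fin n → ZMod 3)) : Set (Fin n → ZMod 3))) :
    ((∑ i : I, (A i).card : ℤ)) ^ 2 - 3 ^ n * (∑ i : I, (A i).card : ℤ)
      - 2 ^ (2 * n) * 3 ^ n * rAP 3 3 n ≤ 0 := by
  classical
  set r := rAP 3 3 n with hr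
  have hle : ∀ i j : I, i ≠ j → (A i ∩ A j).card ≤ r := by
    intro i j hij
    apply le_csSup
    · refine ⟨Fintype.card (Fin n → ZMod 3), ?_⟩
      rintro s ⟨B, -, rfl⟩
      exact Finset.card_le_univ B
    · exact ⟨A i ∩ A j, hstar i j hij, rfl⟩
  let f : (Fin n → ZMod 3) → I → ℤ := fun x i => if x ∈ A i then 1 else 0
  have hcard : ∀ B : Finset (Fin n → ZMod 3),
      (B.card : ℤ) = ∑ x, if x ∈ B then (1 : ℤ) else 0 := by
    intro B
    simp
  have hS : (∑ i : I, ((A i).card : ℤ)) = ∑ x, ∑ i, f x i := by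
    rw [Finset.sum_comm]
    exact Finset.sum_congr rfl fun i _ => hcard (A i)
  have hcs : (∑ x, ∑ i, f x i) ^ 2 ≤ 3 ^ n * ∑ x, (∑ i, f x i) ^ 2 := by
    have h := sq_sum_le_card_mul_sum_sq (s := (Finset.univ : Finset (Fin n → ZMod 3)))
      (f := fun x => ∑ i, f x i)
    simpa [ZMod.card] using h
  have hsq : ∑ x, (∑ i, f x i) ^ 2 = ∑ i, ∑ j, ((A i ∩ A j).card : ℤ) := by
    simp_rw [sq, Finset.sum_mul_sum]
    rw [Finset.sum_comm]
    refine Finset.sum_congr rfl fun i _ => ?_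
    rw [Finset.sum_comm]
    refine Finset.sum_congr rfl fun j _ => ?_
    rw [hcard]
    refine Finset.sum_congr rfl fun x _ => ?_
    by_cases h1 : x ∈ A i <;> by_cases h2 : x ∈ A j <;> simp [f, h1, h2]
  have hb : ∑ i, ∑ j, ((A i ∩ A j).card : ℤ)
      ≤ (∑ i : I, ((A i).card : ℤ)) + 2 ^ (2 * n) * r := by
    calc ∑ i, ∑ j, ((A i ∩ A j).card : ℤ)
        ≤ ∑ i : I, ∑ j : I, ((if i = j then ((A i).card : ℤ) else 0) + (r : ℤ)) := by
          refine Finset.sum_le_sum fun i _ => Finset.sum_le_sum fun j _ => ?_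
          by_cases h : i = j
          · subst h
            simp
          · simpa [h] using hle i j h
      _ = _ := by
          simp only [Finset.sum_add_distrib, Finset.sum_ite_eq, Finset.mem_univ, if_true,
            Finset.sum_const, Finset.card_univ, hI, nsmul_eq_mul]
          push_cast
          ring
  rw [← hS, hsq] at hcs
  have h3 := mul_le_mul_of_nonneg_left hb (by positivity : (0 : ℤ) ≤ 3 ^ n)
  linarith
end
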